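/- Let f_i : ℝ^d → ℝ, i ∈ {1,…,n}, be twice continuously differentiable with ‖∇²f_i(x) − ∇²f_i(y)‖ ≤ H‖x − y‖ (spectral norm), let f := (1/n)Σ_i f_i be μ-strongly convex (μ > 0), and let x* satisfy ∇f(x*) = 0. For each i, let {B_i^{jl} : j,l ∈ [d]} be real d×d matrices with ‖B_i^{jl}‖_F ≤ R and let ℓ_i : ℝ^d → ℝ^{d×d} satisfy ∇²f_i(x) = Σ_{j,l} (ℓ_i(x))_{jl} B_i^{jl} for all x and ‖ℓ_i(x) − ℓ_i(y)‖_F ≤ M₁‖x − y‖. Set N_B := 1 if for every i the family {B_i^{jl}} is pairwise orthogonal in the Frobenius inner product, and N_B := d² otherwise. Fix 0 < δ ≤ 1 and 0 < δ_M ≤ 1 and set A := δ/4, B := 6/δ − 7/2, A_M := δ_M/4, B_M := 6/δ_M − 7/2. Consider sequences z^k, w^k ∈ ℝ^d with w⁰ = z⁰, matrices L_i^k ∈ ℝ^{d×d}, and an arbitrary sequence ξ^k ∈ {0,1}, generated by: L_i^{k+1} = L_i^k + S_i^k where ‖S_i^k − (ℓ_i(z^k) − L_i^k)‖_F² ≤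 (1 − δ)‖ℓ_i(z^k) − L_i^k‖_F²; H^k := (1/n)Σ_i Σ_{j,l} (L_i^k)_{jl} B_i^{jl}; Ĥ^k a symmetric matrix with Ĥ^k ⪰ μI and ‖Ĥ^k − ∇²f(x*)‖_F ≤ ‖H^k − ∇²f(x*)‖_F; if ξ^k = 1 then g^k := ∇f(z^k) and w^{k+1} := z^k, while if ξ^k = 0 then g^k := Ĥ^k(z^k − w^k) + ∇f(w^k) and w^{k+1} := w^k; x^{k+1} := z^k − (Ĥ^k)⁻¹ g^k; z^{k+1} := z^k + v^k where ‖v^k − (x^{k+1} − z^k)‖² ≤ (1 − δ_M)‖x^{k+1} − z^k‖². Define 𝓗^k := (1/n)Σ_i ‖L_i^k − ℓ_i(x*)‖_F² and c̃₂ := min{ A_M μ²/(4H² B_M), A·A_M μ²/(16 N_B R² B_M · B · M₁²) }. If ‖z⁰ − x*‖² ≤ c̃₂ and 𝓗⁰ ≤ A_M μ²/(16 N_B R² B_M), then for every k ≥ 0: ‖z^k − x*‖² ≤ c̃₂ and 𝓗^k ≤ A_M μ²/(16 N_B R² B_M). -/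

import Mathlib

open Matrix Classical

/-- Frobenius inner product of matrices. -/
noncomputable def frobInner {d : ℕ} (M N : Matrix (Fin d) (Fin d) ℝ) : ℝ :=
  ∑ s, ∑ t, M s t * N s t

/-- Frobenius norm squared: sum of squares of all entries. -/
noncomputable def frobSq {d : ℕ} (M : Matrix (Fin d) (Fin d) ℝ) : ℝ :=
  ∑ i, ∑ j, (M i j) ^ 2

/-- Frobenius norm. -/
noncomputable def frobNorm {d : ℕ} (M : Matrix (Fin d) (Fin d) ℝ) : ℝ :=
  Real.sqrt (frobSq M)

/-- Spectral norm (operator 2-norm) of a matrix. -/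
noncomputable def specNorm {d : ℕ} (M : Matrix (Fin d) (Fin d) ℝ) : ℝ :=
  ‖Matrix.toEuclideanCLM (𝕜 := ℝ) M‖

/-- The Hessian matrix of `f` at `x` (the derivative of the gradient). -/
noncomputable def hess {d : ℕ} (f : EuclideanSpace ℝ (Fin d) → ℝ)
    (x : EuclideanSpace ℝ (Fin d)) : Matrix (Fin d) (Fin d) ℝ :=
  fun j l => fderiv ℝ (gradient f) x (EuclideanSpace.single l 1) j

theorem scal_aux (δ s p q : ℝ) (h0 : 0 < δ) (hs0 : 0 ≤ s) (hs : s ^ 2 = 1 - δ) :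
    (p + s * (p + q)) ^ 2 ≤ (1 - δ / 4) * q ^ 2 + (6 / δ - 7 / 2) * p ^ 2 := by
  have hd : δ = 1 - s ^ 2 := by linarith
  have hs1 : s ≤ 1 := by nlinarith
  have key : 0 ≤ 3 * δ * ((1 - δ / 4) * q ^ 2 + (6 / δ - 7 / 2) * p ^ 2 - (p + s * (p + q)) ^ 2) := by
    have e : 3 * δ * ((1 - δ / 4) * q ^ 2 + (6 / δ - 7 / 2) * p ^ 2 - (p + s * (p + q)) ^ 2)
       = (3 * δ / 2 * q - 2 * s * (1 + s) * p) ^ 2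
        + (18 - 21 * δ / 2 - (1 + s) ^ 2 * (4 - δ)) * p ^ 2 + 3 * δ * (1 - δ - s ^ 2) * q ^ 2
        + 4 * (1 + s) ^ 2 * (1 - δ - s ^ 2) * p ^ 2 := by
      field_simp
      ring
    rw [e]
    have h2 : 0 ≤ 18 - 21 * δ / 2 - (1 + s) ^ 2 * (4 - δ) := by
      have a1 : (1 + s) ^ 2 ≤ 4 - 2 * δ := by nlinarith [sq_nonneg (1 - s)]
      nlinarith
    have h3 : 1 - δ - s ^ 2 = 0 := by linarith
    rw [h3]
    have := mul_nonneg h2 (sq_nonneg p)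
    nlinarith [sq_nonneg (3 * δ / 2 * q - 2 * s * (1 + s) * p)]
  have := nonneg_of_mul_nonneg_right key (by positivity)
  linarith

theorem compress_aux {E : Type*} [NormedAddCommGroup E] (δ : ℝ) (h0 : 0 < δ) (h1 : δ ≤ 1)
    (a y e : E) (he : ‖e‖ ^ 2 ≤ (1 - δ) * ‖y - a‖ ^ 2) :
    ‖y + e‖ ^ 2 ≤ (1 - δ / 4) * ‖a‖ ^ 2 + (6 / δ - 7 / 2) * ‖y‖ ^ 2 := by
  have hs := Real.sq_sqrt (show 0 ≤ 1 - δ by linarith)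
  have hs0 := Real.sqrt_nonneg (1 - δ)
  set s := Real.sqrt (1 - δ)
  have e1 : ‖e‖ ≤ s * ‖y - a‖ := by
    apply le_of_sq_le_sq _ (by positivity)
    rw [mul_pow, hs]; exact he
  have e2 : ‖y + e‖ ≤ ‖y‖ + s * (‖y‖ + ‖a‖) :=
    (norm_add_le _ _).trans (by
      have := mul_le_mul_of_nonneg_left (norm_sub_le y a) hs0
      linarith)
  exact (pow_le_pow_left₀ (norm_nonneg _) e2 2).trans (scal_aux δ s _ _ h0 hs0 hs)

noncomputable def vecM {d : ℕ} : Matrix (Fin d) (Fin d) ℝ →ₗ[ℝ] EuclideanSpace ℝ (Fin d × Fin d) where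
  toFun M := WithLp.toLp 2 (fun p => M p.1 p.2)
  map_add' M N := by ext p; simp
  map_smul' c N := by ext p; simp

theorem frobSq_eq {d : ℕ} (M : Matrix (Fin d) (Fin d) ℝ) : frobSq M = ‖vecM M‖ ^ 2 := by
  rw [EuclideanSpace.norm_sq_eq, Fintype.sum_prod_type]
  simp [vecM, frobSq]

theorem frobNorm_eq {d : ℕ} (M : Matrix (Fin d) (Fin d) ℝ) : frobNorm M = ‖vecM M‖ := by
  rw [frobNorm, frobSq_eq, Real.sqrt_sq (norm_nonneg _)]

theorem frobInner_eq {d : ℕ} (M N : Matrix (Fin d) (Fin d) ℝ) :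
    frobInner M N = inner ℝ (vecM M) (vecM N) := by
  rw [PiLp.inner_apply, Fintype.sum_prod_type]
  simp [vecM, frobInner, mul_comm]

theorem clm_le_frob {d : ℕ} (M : Matrix (Fin d) (Fin d) ℝ) (u : EuclideanSpace ℝ (Fin d)) :
    ‖Matrix.toEuclideanCLM (𝕜 := ℝ) M u‖ ≤ ‖vecM M‖ * ‖u‖ := by
  apply le_of_sq_le_sq _ (by positivity)
  rw [mul_pow, ← frobSq_eq, EuclideanSpace.norm_sq_eq, EuclideanSpace.norm_sq_eq, frobSq,
    Finset.sum_mul]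
  apply Finset.sum_le_sum
  intro i _
  have := Finset.sum_mul_sq_le_sq_mul_sq Finset.univ (fun j => M i j) (fun j => u j)
  simpa [Matrix.mulVec, dotProduct] using this

theorem lower_aux {d : ℕ} (μ : ℝ) (M : Matrix (Fin d) (Fin d) ℝ)
    (h : (M - μ • (1 : Matrix (Fin d) (Fin d) ℝ)).PosSemidef) (u : EuclideanSpace ℝ (Fin d)) :
    μ * ‖u‖ ≤ ‖Matrix.toEuclideanCLM (𝕜 := ℝ) M u‖ := by
  have h1 := h.dotProduct_mulVec_nonneg (WithLp.ofLp u)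
  have h2 : inner ℝ u (Matrix.toEuclideanCLM (𝕜 := ℝ) M u) = u.ofLp ⬝ᵥ (M *ᵥ u.ofLp) := by
    simp [PiLp.inner_apply, dotProduct, mul_comm]
  have h3 : ‖u‖ ^ 2 = u.ofLp ⬝ᵥ u.ofLp := by
    rw [EuclideanSpace.norm_sq_eq]
    simp [dotProduct, sq]
  have h4 : μ * ‖u‖ ^ 2 ≤ inner ℝ u (Matrix.toEuclideanCLM (𝕜 := ℝ) M u) := by
    rw [h2, h3]
    simp only [Matrix.sub_mulVec, dotProduct_sub, star_trivial, Matrix.smul_mulVec,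
      Matrix.one_mulVec, dotProduct_smul, smul_eq_mul] at h1
    linarith
  have h5 := h4.trans (real_inner_le_norm _ _)
  rcases (norm_nonneg u).eq_or_lt with h0 | h0
  · rw [← h0]; simp
  · have : ‖u‖ * (μ * ‖u‖) ≤ ‖u‖ * ‖Matrix.toEuclideanCLM (𝕜 := ℝ) M u‖ := by linarith
    exact le_of_mul_le_mul_left this h0

theorem unit_aux {d : ℕ} (μ : ℝ) (hμ : 0 < μ) (M : Matrix (Fin d) (Fin d) ℝ)
    (h : (M - μ • (1 : Matrix (Fin d) (Fin d) ℝ)).PosSemidef) : IsUnit M.det := by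
  rw [← Matrix.isUnit_iff_isUnit_det, ← Matrix.mulVec_injective_iff_isUnit]
  intro a b hab
  have h1 := lower_aux μ M h (WithLp.toLp 2 (a - b))
  have h2 : Matrix.toEuclideanCLM (𝕜 := ℝ) M (WithLp.toLp 2 (a - b)) = 0 := by
    ext i
    simp [hab]
  rw [h2, norm_zero] at h1
  have h3 : ‖WithLp.toLp 2 (a - b)‖ = 0 := le_antisymm (by nlinarith) (norm_nonneg _)
  rw [norm_eq_zero] at h3
  have : a - b = 0 := by simpa [← WithLp.toLp_sub] using congrArg WithLp.ofLp h3
  exact sub_eq_zero.mp this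

theorem mul_inv_aux {d : ℕ} (M : Matrix (Fin d) (Fin d) ℝ) (h : IsUnit M.det)
    (u : EuclideanSpace ℝ (Fin d)) :
    Matrix.toEuclideanCLM (𝕜 := ℝ) M (Matrix.toEuclideanCLM (𝕜 := ℝ) M⁻¹ u) = u := by
  rw [← mul_apply_eq_comp, ← map_mul, Matrix.mul_nonsing_inv _ h, map_one]; rfl

theorem inv_mul_aux {d : ℕ} (M : Matrix (Fin d) (Fin d) ℝ) (h : IsUnit M.det)
    (u : EuclideanSpace ℝ (Fin d)) :
    Matrix.toEuclideanCLM (𝕜 := ℝ) M⁻¹ (Matrix.toEuclideanCLM (𝕜 := ℝ) M u) = u := by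
  rw [← mul_apply_eq_comp, ← map_mul, Matrix.nonsing_inv_mul _ h, map_one]; rfl

theorem hess_clm {d : ℕ} (f : EuclideanSpace ℝ (Fin d) → ℝ) (x : EuclideanSpace ℝ (Fin d)) :
    Matrix.toEuclideanCLM (𝕜 := ℝ) (hess f x) = fderiv ℝ (gradient f) x := by
  ext u i
  have hu : u = ∑ l, u l • EuclideanSpace.single l (1 : ℝ) := by
    ext j
    simp [Finset.sum_apply, Pi.single_apply]
  conv_rhs => rw [hu]
  simp [hess, Matrix.mulVec, dotProduct, mul_comm]

theorem grad_diff {d : ℕ} (f : EuclideanSpace ℝ (Fin d) → ℝ) (hf : ContDiff ℝ 2 f) :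
    Differentiable ℝ (gradient f) := by
  have h1 : ContDiff ℝ 1 (fderiv ℝ f) := hf.fderiv_right (by norm_num)
  have h2 : Differentiable ℝ (fderiv ℝ f) := h1.differentiable (by norm_num)
  intro x
  exact ((InnerProductSpace.toDual ℝ (EuclideanSpace ℝ (Fin d))).symm.toContinuousLinearEquiv.differentiable.comp h2) x

theorem grad_avg {d n : ℕ} (f : Fin n → EuclideanSpace ℝ (Fin d) → ℝ)
    (hf : ∀ i, ContDiff ℝ 2 (f i)) :
    gradient (fun x => (1 / (n : ℝ)) * ∑ i, f i x) =
      fun x => (1 / (n : ℝ)) • ∑ i, gradient (f i) x := by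
  funext x
  have hd : ∀ i, DifferentiableAt ℝ (f i) x := fun i => (hf i).differentiable (by norm_num) x
  unfold gradient
  rw [fderiv_const_mul (DifferentiableAt.fun_sum fun i _ => hd i), fderiv_fun_sum (fun i _ => hd i)]
  simp

theorem hess_avg {d n : ℕ} (f : Fin n → EuclideanSpace ℝ (Fin d) → ℝ)
    (hf : ∀ i, ContDiff ℝ 2 (f i)) (x : EuclideanSpace ℝ (Fin d)) :
    hess (fun x => (1 / (n : ℝ)) * ∑ i, f i x) x = (1 / (n : ℝ)) • ∑ i, hess (f i) x := by
  have hd : ∀ i, DifferentiableAt ℝ (gradient (f i)) x := fun i => grad_diff _ (hf i) x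
  ext j l
  rw [Matrix.smul_apply, Matrix.sum_apply]
  unfold hess
  rw [grad_avg f hf, fderiv_fun_const_smul (DifferentiableAt.fun_sum fun i _ => hd i),
    fderiv_fun_sum (fun i _ => hd i)]
  simp

theorem taylor_aux {d : ℕ} (f : EuclideanSpace ℝ (Fin d) → ℝ) (hf : ContDiff ℝ 2 f) (H : ℝ)
    (xs w : EuclideanSpace ℝ (Fin d))
    (hH : ∀ x, ‖fderiv ℝ (gradient f) x - fderiv ℝ (gradient f) xs‖ ≤ H * ‖x - xs‖) :
    ‖gradient f w - gradient f xs - fderiv ℝ (gradient f) xs (w - xs)‖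
      ≤ |H| * ‖w - xs‖ * ‖w - xs‖ := by
  refine (convex_closedBall xs ‖w - xs‖).norm_image_sub_le_of_norm_fderiv_le'
    (fun x _ => grad_diff f hf x) (fun x hx => (hH x).trans ?_)
    (Metric.mem_closedBall_self (norm_nonneg _)) (by simp [dist_eq_norm])
  rw [Metric.mem_closedBall, dist_eq_norm] at hx
  exact mul_le_mul (le_abs_self H) hx (norm_nonneg _) (abs_nonneg _)

theorem avg_lip {d n : ℕ} (hn : 1 ≤ n) (H r : ℝ) (D : Fin n → Matrix (Fin d) (Fin d) ℝ)
    (h : ∀ i, specNorm (D i) ≤ H * r) :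
    ‖Matrix.toEuclideanCLM (𝕜 := ℝ) ((1 / (n : ℝ)) • ∑ i, D i)‖ ≤ H * r := by
  have hn' : (0 : ℝ) < n := by exact_mod_cast hn
  rw [map_smul, map_sum, norm_smul]
  have : ‖∑ i, Matrix.toEuclideanCLM (𝕜 := ℝ) (D i)‖ ≤ n * (H * r) := by
    refine (norm_sum_le _ _).trans ((Finset.sum_le_sum fun i _ => h i).trans ?_)
    simp
  rw [Real.norm_of_nonneg (by positivity), one_div, inv_mul_le_iff₀ hn']
  exact this

theorem avg_sq {n : ℕ} (hn : 1 ≤ n) {E : Type*} [NormedAddCommGroup E] [NormedSpace ℝ E]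
    (D : Fin n → E) :
    ‖(1 / (n : ℝ)) • ∑ i, D i‖ ^ 2 ≤ (1 / (n : ℝ)) * ∑ i, ‖D i‖ ^ 2 := by
  have hn' : (0 : ℝ) < n := by exact_mod_cast hn
  rw [norm_smul, mul_pow, Real.norm_of_nonneg (by positivity)]
  have h1 : ‖∑ i, D i‖ ^ 2 ≤ n * ∑ i, ‖D i‖ ^ 2 := by
    refine (pow_le_pow_left₀ (norm_nonneg _) (norm_sum_le _ _) 2).trans ?_
    have := sq_sum_le_card_mul_sum_sq (s := (Finset.univ : Finset (Fin n))) (f := fun i => ‖D i‖)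
    simpa using this
  calc (1 / (n : ℝ)) ^ 2 * ‖∑ i, D i‖ ^ 2 ≤ (1 / (n : ℝ)) ^ 2 * (n * ∑ i, ‖D i‖ ^ 2) := by gcongr
    _ = _ := by field_simp

theorem basis_orth {d : ℕ} (R : ℝ) (B : Fin d → Fin d → Matrix (Fin d) (Fin d) ℝ)
    (hBR : ∀ j l, frobNorm (B j l) ≤ R)
    (ho : ∀ (j l j' l' : Fin d), (j, l) ≠ (j', l') → frobInner (B j l) (B j' l') = 0)
    (C : Matrix (Fin d) (Fin d) ℝ) :
    frobSq (∑ j, ∑ l, C j l • B j l) ≤ R ^ 2 * frobSq C := by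
  have e : vecM (∑ j, ∑ l, C j l • B j l) = ∑ p : Fin d × Fin d, C p.1 p.2 • vecM (B p.1 p.2) := by
    simp [Fintype.sum_prod_type]
  rw [frobSq_eq, e, ← real_inner_self_eq_norm_sq, sum_inner]
  simp_rw [inner_sum]
  have : ∀ p : Fin d × Fin d, ∑ q : Fin d × Fin d,
      inner ℝ (C p.1 p.2 • vecM (B p.1 p.2)) (C q.1 q.2 • vecM (B q.1 q.2))
      = C p.1 p.2 ^ 2 * ‖vecM (B p.1 p.2)‖ ^ 2 := by
    intro p
    rw [Finset.sum_eq_single p]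
    · rw [real_inner_self_eq_norm_sq, norm_smul, mul_pow, Real.norm_eq_abs, sq_abs]
    · intro q _ hq
      have := ho p.1 p.2 q.1 q.2 (by simpa using hq.symm)
      rw [frobInner_eq] at this
      rw [inner_smul_left, inner_smul_right, this]; simp
    · simp
  rw [Finset.sum_congr rfl (fun p _ => this p), frobSq, ← Fintype.sum_prod_type', Finset.mul_sum]
  apply Finset.sum_le_sum
  intro p _
  rw [mul_comm]
  have := hBR p.1 p.2
  rw [frobNorm_eq] at this
  gcongr

theorem basis_gen {d : ℕ} (R : ℝ) (B : Fin d → Fin d → Matrix (Fin d) (Fin d) ℝ)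
    (hBR : ∀ j l, frobNorm (B j l) ≤ R)
    (C : Matrix (Fin d) (Fin d) ℝ) :
    frobSq (∑ j, ∑ l, C j l • B j l) ≤ (d : ℝ) ^ 2 * R ^ 2 * frobSq C := by
  have e : vecM (∑ j, ∑ l, C j l • B j l) = ∑ p : Fin d × Fin d, C p.1 p.2 • vecM (B p.1 p.2) := by
    simp [Fintype.sum_prod_type]
  rw [frobSq_eq, e]
  have h1 := pow_le_pow_left₀ (norm_nonneg _)
    (norm_sum_le (Finset.univ) (fun p : Fin d × Fin d => C p.1 p.2 • vecM (B p.1 p.2))) 2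
  refine h1.trans (sq_sum_le_card_mul_sum_sq.trans ?_)
  rw [mul_assoc, frobSq, ← Fintype.sum_prod_type' (f := fun i j => C i j ^ 2)]
  have : ((Finset.univ : Finset (Fin d × Fin d)).card : ℝ) = (d : ℝ) ^ 2 := by
    simp [sq]
  rw [this]
  refine mul_le_mul_of_nonneg_left ?_ (sq_nonneg _)
  rw [Finset.mul_sum]
  apply Finset.sum_le_sum
  intro p _
  rw [norm_smul, mul_pow, Real.norm_eq_abs, sq_abs, mul_comm]
  have := hBR p.1 p.2
  rw [frobNorm_eq] at this
  have h3 := pow_le_pow_left₀ (norm_nonneg _) this 2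
  exact mul_le_mul_of_nonneg_right h3 (sq_nonneg _)

theorem num_aux (a b Q : ℝ) (h1 : a ^ 2 ≤ Q / 16) (h2 : b ^ 2 ≤ Q / 4) (h3 : 0 ≤ Q) :
    (a + b) ^ 2 ≤ Q := by
  nlinarith [sq_nonneg (a - b)]

set_option maxHeartbeats 1000000 in
/-- Theorem 4.10 (ii) (neighborhood invariance for BL1), with deterministic contraction
compressors for both Hessians and models, for every realization of the Bernoulli
variables `ξ^k`. -/
theorem bl1_neighborhood_invariance (d n : ℕ) (hn : 1 ≤ n)
    (f : Fin n → EuclideanSpace ℝ (Fin d) → ℝ)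
    (hf : ∀ i, ContDiff ℝ 2 (f i))
    (μ : ℝ) (hμ : 0 < μ)
    (fbar : EuclideanSpace ℝ (Fin d) → ℝ)
    (hfbar : fbar = fun x => (1 / (n : ℝ)) * ∑ i, f i x)
    (hsc : ∀ x, ((hess fbar x) - μ • (1 : Matrix (Fin d) (Fin d) ℝ)).PosSemidef)
    (H : ℝ)
    (hH : ∀ i x y, specNorm (hess (f i) x - hess (f i) y) ≤ H * ‖x - y‖)
    (xstar : EuclideanSpace ℝ (Fin d)) (hstar : gradient fbar xstar = 0)
    (R : ℝ) (B : Fin n → Fin d → Fin d → Matrix (Fin d) (Fin d) ℝ)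
    (hBR : ∀ i j l, frobNorm (B i j l) ≤ R)
    (ℓ : Fin n → EuclideanSpace ℝ (Fin d) → Matrix (Fin d) (Fin d) ℝ)
    (hrep : ∀ i x, hess (f i) x = ∑ j, ∑ l, (ℓ i x) j l • B i j l)
    (M₁ : ℝ)
    (hℓLip : ∀ i x y, frobNorm (ℓ i x - ℓ i y) ≤ M₁ * ‖x - y‖)
    (NB : ℝ)
    (hNB : NB = if (∀ i (j l j' l' : Fin d), (j, l) ≠ (j', l') →
        frobInner (B i j l) (B i j' l') = 0) then (1 : ℝ) else (d : ℝ) ^ 2)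
    (δ δM : ℝ) (hδ0 : 0 < δ) (hδ1 : δ ≤ 1) (hδM0 : 0 < δM) (hδM1 : δM ≤ 1)
    (Ac Bc AM BM : ℝ) (hAc : Ac = δ / 4) (hBc : Bc = 6 / δ - 7 / 2)
    (hAM : AM = δM / 4) (hBM : BM = 6 / δM - 7 / 2)
    (z w x v : ℕ → EuclideanSpace ℝ (Fin d)) (hw0 : w 0 = z 0)
    (ξ : ℕ → Bool)
    (L S : ℕ → Fin n → Matrix (Fin d) (Fin d) ℝ)
    (hS : ∀ k i, frobSq (S k i - (ℓ i (z k) - L k i))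
      ≤ (1 - δ) * frobSq (ℓ i (z k) - L k i))
    (hL : ∀ k i, L (k + 1) i = L k i + S k i)
    (Hmat : ℕ → Matrix (Fin d) (Fin d) ℝ)
    (hHmat : ∀ k, Hmat k = (1 / (n : ℝ)) • ∑ i, ∑ j, ∑ l, (L k i) j l • B i j l)
    (Hhat : ℕ → Matrix (Fin d) (Fin d) ℝ)
    (hHhatsymm : ∀ k, (Hhat k).IsSymm)
    (hHhatpsd : ∀ k, (Hhat k - μ • (1 : Matrix (Fin d) (Fin d) ℝ)).PosSemidef)
    (hHhatproj : ∀ k, frobNorm (Hhat k - hess fbar xstar)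
      ≤ frobNorm (Hmat k - hess fbar xstar))
    (g : ℕ → EuclideanSpace ℝ (Fin d))
    (hξtrue : ∀ k, ξ k = true →
      g k = gradient fbar (z k) ∧ w (k + 1) = z k)
    (hξfalse : ∀ k, ξ k = false →
      g k = Matrix.toEuclideanCLM (𝕜 := ℝ) (Hhat k) (z k - w k)
              + gradient fbar (w k)
        ∧ w (k + 1) = w k)
    (hx : ∀ k, x (k + 1) = z k - Matrix.toEuclideanCLM (𝕜 := ℝ) (Hhat k)⁻¹ (g k))
    (hv : ∀ k, ‖v k - (x (k + 1) - z k)‖ ^ 2 ≤ (1 - δM) * ‖x (k + 1) - z k‖ ^ 2)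
    (hz : ∀ k, z (k + 1) = z k + v k)
    (𝓗 : ℕ → ℝ)
    (h𝓗 : ∀ k, 𝓗 k = (1 / (n : ℝ)) * ∑ i, frobSq (L k i - ℓ i xstar))
    (c₂ : ℝ)
    (hc₂ : c₂ = min (AM * μ ^ 2 / (4 * H ^ 2 * BM))
      (Ac * AM * μ ^ 2 / (16 * NB * R ^ 2 * BM * Bc * M₁ ^ 2)))
    (hinit1 : ‖z 0 - xstar‖ ^ 2 ≤ c₂)
    (hinit2 : 𝓗 0 ≤ AM * μ ^ 2 / (16 * NB * R ^ 2 * BM)) :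
    ∀ k, ‖z k - xstar‖ ^ 2 ≤ c₂ ∧ 𝓗 k ≤ AM * μ ^ 2 / (16 * NB * R ^ 2 * BM) := by
  have hd1 : 0 < Ac ∧ Ac ≤ 1 := by subst hAc; constructor <;> linarith
  have hd2 : 0 < AM ∧ AM ≤ 1 := by subst hAM; constructor <;> linarith
  have hB1 : 0 < Bc := by
    have : 6 ≤ 6 / δ := by rw [le_div_iff₀ hδ0]; linarith
    linarith
  have hB2 : 0 < BM := by
    have : 6 ≤ 6 / δM := by rw [le_div_iff₀ hδM0]; linarith
    linarith
  have hn' : (0 : ℝ) < n := by exact_mod_cast hn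
  have hNB0 : 0 ≤ NB := by rw [hNB]; split_ifs <;> positivity
  set T := AM * μ ^ 2 / (16 * NB * R ^ 2 * BM) with hT
  have hT0 : 0 ≤ T := by have := hd2.1; positivity
  -- consequences of the definition of c₂
  have hcH : H ^ 2 * c₂ ≤ AM * μ ^ 2 / (4 * BM) := by
    have h1 : c₂ ≤ AM * μ ^ 2 / (4 * H ^ 2 * BM) := hc₂ ▸ min_le_left _ _
    by_cases h0 : H = 0
    · rw [h0]; have := hd2.1; simp; positivity
    · calc H ^ 2 * c₂ ≤ H ^ 2 * (AM * μ ^ 2 / (4 * H ^ 2 * BM)) := by gcongr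
        _ = _ := by field_simp
  have hcM : Bc * M₁ ^ 2 * c₂ ≤ Ac * T := by
    have h1 : c₂ ≤ Ac * AM * μ ^ 2 / (16 * NB * R ^ 2 * BM * Bc * M₁ ^ 2) := hc₂ ▸ min_le_right _ _
    by_cases h0 : M₁ = 0
    · rw [h0]; have := mul_nonneg hd1.1.le hT0; simpa using this
    · calc Bc * M₁ ^ 2 * c₂ ≤ Bc * M₁ ^ 2 * (Ac * AM * μ ^ 2 / (16 * NB * R ^ 2 * BM * Bc * M₁ ^ 2)) := by gcongr
        _ = (Bc * M₁ ^ 2) * (Bc * M₁ ^ 2)⁻¹ * (Ac * T) := by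
          rw [hT, div_eq_mul_inv, div_eq_mul_inv]; simp only [mul_inv]; ring
        _ = _ := by rw [mul_inv_cancel₀ (by positivity), one_mul]
  have hTN : NB * R ^ 2 * T ≤ AM * μ ^ 2 / (16 * BM) := by
    by_cases h0 : NB * R ^ 2 = 0
    · rw [h0]; have := hd2.1; simp; positivity
    · have : NB * R ^ 2 * T = (NB * R ^ 2) * (NB * R ^ 2)⁻¹ * (AM * μ ^ 2 / (16 * BM)) := by
        rw [hT, div_eq_mul_inv, div_eq_mul_inv]; simp only [mul_inv]; ring
      rw [this, mul_inv_cancel₀ h0, one_mul]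
  have hc0 : 0 ≤ c₂ := (sq_nonneg _).trans hinit1
  have hhess : ∀ y, hess fbar y = (1 / (n : ℝ)) • ∑ i, hess (f i) y := by
    intro y; rw [hfbar]; exact hess_avg f hf y
  have hfC : ContDiff ℝ 2 fbar := by
    rw [hfbar]; exact contDiff_const.mul (ContDiff.sum fun i _ => hf i)
  have hLipf : ∀ y, ‖fderiv ℝ (gradient fbar) y - fderiv ℝ (gradient fbar) xstar‖
      ≤ H * ‖y - xstar‖ := by
    intro y
    rw [← hess_clm, ← hess_clm, ← map_sub, hhess, hhess, ← smul_sub, ← Finset.sum_sub_distrib]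
    exact avg_lip hn _ _ _ (fun i => hH i y xstar)
  -- Hessian estimate error
  have hHk : ∀ k, frobSq (Hmat k - hess fbar xstar) ≤ NB * R ^ 2 * 𝓗 k := by
    intro k
    have hb : ∀ i, frobSq (∑ j, ∑ l, (L k i - ℓ i xstar) j l • B i j l)
        ≤ NB * R ^ 2 * frobSq (L k i - ℓ i xstar) := by
      intro i
      rw [hNB]
      split_ifs with ho
      · rw [one_mul]; exact basis_orth R (B i) (hBR i) (ho i) _
      · exact basis_gen R (B i) (hBR i) _
    have e : Hmat k - hess fbar xstar
        = (1 / (n : ℝ)) • ∑ i, ∑ j, ∑ l, (L k i - ℓ i xstar) j l • B i j l := by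
      rw [hHmat, hhess, ← smul_sub, ← Finset.sum_sub_distrib]
      congr 1
      apply Finset.sum_congr rfl; intro i _
      rw [hrep, ← Finset.sum_sub_distrib]
      apply Finset.sum_congr rfl; intro j _
      rw [← Finset.sum_sub_distrib]
      apply Finset.sum_congr rfl; intro l _
      rw [← sub_smul, Matrix.sub_apply]
    rw [e, frobSq_eq, map_smul, map_sum, h𝓗]
    refine (avg_sq hn _).trans ?_
    have h2 : ∑ i, ‖vecM (∑ j, ∑ l, (L k i - ℓ i xstar) j l • B i j l)‖ ^ 2
        ≤ NB * R ^ 2 * ∑ i, frobSq (L k i - ℓ i xstar) := by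
      rw [Finset.mul_sum]
      apply Finset.sum_le_sum
      intro i _
      rw [← frobSq_eq]; exact hb i
    have h3 := mul_le_mul_of_nonneg_left h2 (show 0 ≤ 1 / (n : ℝ) by positivity)
    linarith
  -- the Newton-type step
  have hxw : ∀ k, x (k + 1) = w (k + 1)
      - Matrix.toEuclideanCLM (𝕜 := ℝ) (Hhat k)⁻¹ (gradient fbar (w (k + 1))) := by
    intro k
    cases hk : ξ k with
    | true =>
      obtain ⟨h1, h2⟩ := hξtrue k hk
      rw [hx, h1, h2]
    | false =>
      obtain ⟨h1, h2⟩ := hξfalse k hk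
      rw [hx, h1, h2, map_add, inv_mul_aux _ (unit_aux μ hμ _ (hHhatpsd k))]
      abel
  have hstep : ∀ k, ‖w (k + 1) - xstar‖ ^ 2 ≤ c₂ → 𝓗 k ≤ T →
      BM * ‖x (k + 1) - xstar‖ ^ 2 ≤ AM * c₂ := by
    intro k hw hTk
    have hu := unit_aux μ hμ _ (hHhatpsd k)
    have hlow := lower_aux μ _ (hHhatpsd k) (x (k + 1) - xstar)
    have e : Matrix.toEuclideanCLM (𝕜 := ℝ) (Hhat k) (x (k + 1) - xstar)
        = Matrix.toEuclideanCLM (𝕜 := ℝ) (Hhat k - hess fbar xstar) (w (k + 1) - xstar)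
          - (gradient fbar (w (k + 1)) - gradient fbar xstar
            - fderiv ℝ (gradient fbar) xstar (w (k + 1) - xstar)) := by
      rw [hxw, hstar, sub_right_comm, map_sub, mul_inv_aux _ hu, map_sub (toEuclideanCLM (𝕜 := ℝ)),
        _root_.sub_apply, hess_clm]
      abel
    have t1 := taylor_aux fbar hfC H xstar (w (k + 1)) hLipf
    have t2 := clm_le_frob (Hhat k - hess fbar xstar) (w (k + 1) - xstar)
    have t3 := hHhatproj k
    have t4 := hHk k
    rw [frobSq_eq] at t4
    rw [frobNorm_eq, frobNorm_eq] at t3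
    have t5 : ‖vecM (Hhat k - hess fbar xstar)‖ ^ 2 ≤ AM * μ ^ 2 / (16 * BM) := by
      refine (pow_le_pow_left₀ (norm_nonneg _) t3 2).trans (t4.trans (le_trans ?_ hTN))
      gcongr
    rw [e] at hlow
    have t6 := hlow.trans (norm_sub_le _ _)
    set r := ‖w (k + 1) - xstar‖ with hr
    set F := ‖vecM (Hhat k - hess fbar xstar)‖
    have hr0 : 0 ≤ r := norm_nonneg _
    have t7 : μ * ‖x (k + 1) - xstar‖ ≤ (F + |H| * r) * r := by linarith
    have t8 : μ ^ 2 * ‖x (k + 1) - xstar‖ ^ 2 ≤ (F + |H| * r) ^ 2 * r ^ 2 := by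
      rw [← mul_pow, ← mul_pow]
      exact pow_le_pow_left₀ (by positivity) t7 2
    have t9 : (|H| * r) ^ 2 ≤ AM * μ ^ 2 / (4 * BM) := by
      rw [mul_pow, sq_abs]
      refine le_trans ?_ hcH
      gcongr
    have t10 : (F + |H| * r) ^ 2 ≤ AM * μ ^ 2 / BM := by
      have a1 : AM * μ ^ 2 / (16 * BM) = (AM * μ ^ 2 / BM) / 16 := by field_simp
      have a2 : AM * μ ^ 2 / (4 * BM) = (AM * μ ^ 2 / BM) / 4 := by field_simp
      have a3 : 0 ≤ AM * μ ^ 2 / BM := by have := hd2.1; positivity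
      rw [a1] at t5
      rw [a2] at t9
      exact num_aux _ _ _ t5 t9 a3
    have t11 : μ ^ 2 * ‖x (k + 1) - xstar‖ ^ 2 ≤ AM * μ ^ 2 / BM * c₂ :=
      t8.trans (mul_le_mul t10 hw (by positivity) ((sq_nonneg _).trans t10))
    have t12 : μ ^ 2 * (BM * ‖x (k + 1) - xstar‖ ^ 2) ≤ μ ^ 2 * (AM * c₂) := by
      calc μ ^ 2 * (BM * ‖x (k + 1) - xstar‖ ^ 2) = BM * (μ ^ 2 * ‖x (k + 1) - xstar‖ ^ 2) := by ring
        _ ≤ BM * (AM * μ ^ 2 / BM * c₂) := by gcongr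
        _ = _ := by field_simp
    exact le_of_mul_le_mul_left t12 (by positivity)
  have main : ∀ k, ‖z k - xstar‖ ^ 2 ≤ c₂ ∧ ‖w k - xstar‖ ^ 2 ≤ c₂ ∧ 𝓗 k ≤ T := by
    intro k
    induction k with
    | zero => exact ⟨hinit1, hw0 ▸ hinit1, hinit2⟩
    | succ k ih =>
      obtain ⟨i1, i2, i3⟩ := ih
      have hw1 : ‖w (k + 1) - xstar‖ ^ 2 ≤ c₂ := by
        cases hk : ξ k with
        | true => rw [(hξtrue k hk).2]; exact i1
        | false => rw [(hξfalse k hk).2]; exact i2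
      refine ⟨?_, hw1, ?_⟩
      · have h1 := compress_aux δM hδM0 hδM1 (z k - xstar) (x (k + 1) - xstar)
          (v k - (x (k + 1) - z k)) (by rw [sub_sub_sub_cancel_right]; exact hv k)
        have e : x (k + 1) - xstar + (v k - (x (k + 1) - z k)) = z (k + 1) - xstar := by
          rw [hz]; abel
        rw [e, ← hAM, ← hBM] at h1
        have h2 := hstep k hw1 i3
        have h3 := mul_le_mul_of_nonneg_left i1 (sub_nonneg.mpr hd2.2)
        linarith
      · have hi : ∀ i, frobSq (L (k + 1) i - ℓ i xstar)
            ≤ (1 - Ac) * frobSq (L k i - ℓ i xstar) + Ac * T := by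
          intro i
          have h1 := hS k i
          rw [frobSq_eq, frobSq_eq] at h1
          have h2 := compress_aux δ hδ0 hδ1 (vecM (L k i - ℓ i xstar))
            (vecM (ℓ i (z k) - ℓ i xstar)) (vecM (S k i - (ℓ i (z k) - L k i)))
            (by rw [← map_sub, sub_sub_sub_cancel_right]; exact h1)
          have e : ℓ i (z k) - ℓ i xstar + (S k i - (ℓ i (z k) - L k i))
              = L (k + 1) i - ℓ i xstar := by
            rw [hL]; abel
          rw [← map_add, e, ← hAc, ← hBc] at h2
          rw [frobSq_eq, frobSq_eq]
          have h3 := hℓLip i (z k) xstar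
          rw [frobNorm_eq] at h3
          have h4 := pow_le_pow_left₀ (norm_nonneg _) h3 2
          rw [mul_pow] at h4
          have h5 : ‖vecM (ℓ i (z k) - ℓ i xstar)‖ ^ 2 ≤ M₁ ^ 2 * c₂ := h4.trans (by gcongr)
          have h6 := mul_le_mul_of_nonneg_left h5 hB1.le
          linarith
        have hs : ∑ i, frobSq (L (k + 1) i - ℓ i xstar)
            ≤ (1 - Ac) * ∑ i, frobSq (L k i - ℓ i xstar) + n * (Ac * T) := by
          refine (Finset.sum_le_sum fun i _ => hi i).trans ?_
          rw [Finset.sum_add_distrib, ← Finset.mul_sum]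
          simp
        have hs2 : 𝓗 (k + 1) ≤ (1 - Ac) * 𝓗 k + Ac * T := by
          rw [h𝓗, h𝓗]
          calc _ ≤ 1 / (n : ℝ) * ((1 - Ac) * ∑ i, frobSq (L k i - ℓ i xstar) + n * (Ac * T)) := by
                gcongr
            _ = _ := by field_simp
        have h3 := mul_le_mul_of_nonneg_left i3 (sub_nonneg.mpr hd1.2)
        linarith
  intro k
  exact ⟨(main k).1, (main k).2.2⟩
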